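/- arXiv:1703.03826 — 2 statements merged into one kernel-verified Lean document; each statement's English description precedes it below -/
import Mathlib

section
/- Let A be a central simple algebra over a field F. Then the dimension of A as an F-vector space is a perfect square. -/
open scoped TensorProduct

section CentralSimple

variable (F A : Type*) [Field F] [Ring A] [Algebra F A]

/-- A simple algebra is a simple module over the algebra of endomorphisms generated by left and
right multiplications. -/
theorem isSimpleModule_range_mulLeftRight [IsSimpleRing A] :
    IsSimpleModule (AlgHom.mulLeftRight F A).range A := by
  have hA := isSimpleRing_iff_isTwoSided_imp.1 ‹IsSimpleRing A›
  have := hA.1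
  have key (N : Submodule (AlgHom.mulLeftRight F A).range A) (a b x : A) (hx : x ∈ N) :
      a * x * b ∈ N := by
    have h := N.smul_mem ⟨_, a ⊗ₜ[F] MulOpposite.op b, rfl⟩ hx
    change AlgHom.mulLeftRight F A (a ⊗ₜ[F] MulOpposite.op b) x ∈ N at h
    simpa using h
  refine (isSimpleModule_iff _ _).2 { eq_bot_or_eq_top := fun N => ?_ }
  let I : Ideal A :=
    { N.toAddSubmonoid with smul_mem' := fun a x hx => by simpa using key N a 1 x hx }
  have hI : I.IsTwoSided := ⟨fun {x} b hx => show x * b ∈ N by simpa using key N 1 b x hx⟩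
  rcases hA.2 I hI with h | h
  · exact .inl <| N.eq_bot_iff.2 fun x hx => (Submodule.eq_bot_iff I).1 h x hx
  · exact .inr <| N.eq_top_iff'.2 fun x => (Submodule.eq_top_iff'.1 h x : x ∈ I)

/-- Every linear endomorphism of a finite-dimensional central simple algebra is a sum of maps
`x ↦ a * x * b`. -/
theorem mulLeftRight_surjective_of_isCentral_of_isSimpleRing [Algebra.IsCentral F A]
    [IsSimpleRing A] [FiniteDimensional F A] :
    Function.Surjective (AlgHom.mulLeftRight F A) := by
  intro T
  have := isSimpleModule_range_mulLeftRight F A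
  have scalar (g : Module.End (AlgHom.mulLeftRight F A).range A) :
      ∃ c : F, ∀ x, g x = c • x := by
    have hg (a b x : A) : g (a * x * b) = a * g x * b := by
      have h := g.map_smul ⟨_, a ⊗ₜ[F] MulOpposite.op b, rfl⟩ x
      change g (AlgHom.mulLeftRight F A (a ⊗ₜ[F] MulOpposite.op b) x) =
        AlgHom.mulLeftRight F A (a ⊗ₜ[F] MulOpposite.op b) (g x) at h
      simpa using h
    have hl (x : A) : g x = x * g 1 := by simpa using hg x 1 1
    have hr (x : A) : g x = g 1 * x := by simpa using hg 1 x 1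
    have hc : g 1 ∈ Subalgebra.center F A :=
      Subalgebra.mem_center_iff.2 fun x => (hl x).symm.trans (hr x)
    obtain ⟨c, hc⟩ := Algebra.mem_bot.1 (Algebra.IsCentral.out hc)
    exact ⟨c, fun x => by rw [hr, ← hc, Algebra.smul_def]⟩
  let T' : Module.End (Module.End (AlgHom.mulLeftRight F A).range A) A :=
    { toFun := T
      map_add' := T.map_add
      map_smul' := fun g x => by
        obtain ⟨c, hc⟩ := scalar g
        simp [hc] }
  let b := Module.finBasis F A
  classical
  obtain ⟨⟨_, t, rfl⟩, ht⟩ := jacobson_density (R := (AlgHom.mulLeftRight F A).range) T'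
     (Finset.univ.image b)
  exact ⟨t, b.ext fun i => (ht (b i) (Finset.mem_image_of_mem _ (Finset.mem_univ i))).symm⟩

/-- A finite-dimensional central simple algebra remains simple after extension of scalars. -/
theorem isSimpleRing_baseChange (K : Type*) [Field K] [Algebra F K] [Algebra.IsCentral F A]
    [IsSimpleRing A] [FiniteDimensional F A] : IsSimpleRing (K ⊗[F] A) := by
  refine isSimpleRing_iff_isTwoSided_imp.2 ⟨inferInstance, fun I hI => ?_⟩
  refine or_iff_not_imp_left.2 fun hne => ?_
  obtain ⟨x, hx, hx0⟩ := I.exists_mem_ne_zero_of_ne_bot hne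
  have stable (T : Module.End F A) : T.baseChange K x ∈ I := by
    obtain ⟨t, rfl⟩ := mulLeftRight_surjective_of_isCentral_of_isSimpleRing F A T
    induction t with
    | zero => simp
    | add s t hs ht =>
      rw [map_add, LinearMap.baseChange_add]
      exact I.add_mem hs ht
    | tmul a c =>
      have h : (AlgHom.mulLeftRight F A (a ⊗ₜ[F] c)).baseChange K x =
          (1 ⊗ₜ a) * x * (1 ⊗ₜ c.unop) := by
        clear hx hx0
        induction x with
        | zero => simp
        | add y z hy hz => simp_all [mul_add, add_mul]
        | tmul k y => simp
      rw [h]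
      exact I.mul_mem_right _ (I.mul_mem_left _ hx)
  let b := Module.finBasis F A
  let B := Algebra.TensorProduct.basis K b
  obtain ⟨i, hi⟩ : ∃ i, B.repr x i ≠ 0 := by
    by_contra! h
    exact hx0 (B.repr.map_eq_zero_iff.1 (Finsupp.ext h))
  have hcoord : ((b.coord i).smulRight (1 : A)).baseChange K =
      (B.coord i).smulRight (1 : K ⊗[F] A) := by
    refine B.ext fun j => ?_
    by_cases hij : j = i <;>
      simp [B, hij, Algebra.TensorProduct.one_def]
  have hmem : B.repr x i • (1 : K ⊗[F] A) ∈ I := by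
    have h := stable ((b.coord i).smulRight (1 : A))
    rw [hcoord] at h
    simpa using h
  refine I.eq_top_of_isUnit_mem hmem ?_
  rw [← Algebra.algebraMap_eq_smul_one]
  exact (IsUnit.mk0 _ hi).map (algebraMap K (K ⊗[F] A))

end CentralSimple

/-- The dimension of a central simple algebra over a field is a perfect square. -/
theorem csa_dim_is_square (F A : Type*) [Field F] [Ring A] [Algebra F A]
    [Algebra.IsCentral F A] [IsSimpleRing A] [FiniteDimensional F A] :
    ∃ n : ℕ, Module.finrank F A = n ^ 2 := by
  have := isSimpleRing_baseChange F A (AlgebraicClosure F)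
  obtain ⟨n, _, ⟨e⟩⟩ := IsSimpleRing.exists_algEquiv_matrix_of_isAlgClosed
    (AlgebraicClosure F) (AlgebraicClosure F ⊗[F] A)
  refine ⟨n, ?_⟩
  rw [← Module.finrank_baseChange (R := AlgebraicClosure F), e.toLinearEquiv.finrank_eq,
    Module.finrank_matrix]
  simp [sq]
end

section
/- Let (A, σ) be a central simple algebra of degree 4 with symplectic involution and let x ∈ Symd(A, σ) be a nonzero element with Nrp_σ(x) = 0. Then the right ideal xA has reduced dimension 2, and if moreover Trp_σ(x) = 0, then xA is σ-isotropic, i.e. σ(xA)·(xA) = (0). -/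
/-- A finite-dimensional simple algebra acts faithfully on each nonzero left ideal. -/
theorem finrank_le_sq_finrank_leftIdeal {F A : Type*} [Field F] [Ring A] [Algebra F A]
    [IsSimpleRing A] [FiniteDimensional F A] (I : Submodule A A) (hI : I ≠ ⊥) :
    Module.finrank F A ≤ Module.finrank F I ^ 2 := by
  have : FiniteDimensional F I :=
    inferInstanceAs (FiniteDimensional F (I.restrictScalars F))
  have : Nontrivial I := Submodule.nontrivial_iff_ne_bot.mpr hI
  have hinj : Function.Injective (Algebra.lsmul F F I : A →ₐ[F] Module.End F I) :=
    (Algebra.lsmul F F I : A →ₐ[F] Module.End F I).toRingHom.injective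
  have := LinearMap.finrank_le_finrank_of_injective
    (f := (Algebra.lsmul F F I : A →ₐ[F] Module.End F I).toLinearMap) hinj
  rwa [Module.finrank_linearMap, ← sq] at this

/-- For an antiendomorphism `σ` of a central simple algebra of degree 4, the symmetrized
elements `a + σ a` are not all scalar: otherwise each commutator generates a left ideal of
dimension at most 3, hence vanishes. -/
theorem exists_add_map_notMem_scalar {F A : Type*} [Field F] [Ring A] [Algebra F A]
    [Algebra.IsCentral F A] [IsSimpleRing A] [FiniteDimensional F A]
    (hdeg : Module.finrank F A = 16)
    (σ : A →ₗ[F] A) (hanti : ∀ x y : A, σ (x * y) = σ y * σ x) :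
    ∃ a : A, ∀ t : F, a + σ a ≠ algebraMap F A t := by
  by_contra! h
  choose T hT using h
  have hσ : ∀ a, σ a = T a • (1 : A) - a := fun a ↦ by
    rw [← Algebra.algebraMap_eq_smul_one, ← hT, add_sub_cancel_left]
  have key : ∀ a b, a * b + b * a - T b • a = (T (a * b) - T a * T b) • (1 : A) + T a • b := by
    intro a b
    have h := hanti a b
    simp only [hσ, sub_mul, mul_sub, smul_mul_assoc, mul_smul_comm, one_mul, mul_one] at h
    refine sub_eq_zero.mp (Eq.trans ?_ (sub_eq_zero.mpr h.symm))
    module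
  have mem : ∀ a b c : A, a * (c * b - b * c) ∈ Submodule.span F ({1, b, c, b * c} : Set A) := by
    intro a b c
    have e : a * (c * b - b * c) = (T (a * c * b) - T (a * c) * T b) • (1 : A) + T (a * c) • b
        - ((T (a * b) - T a * T b) • c + T a • (b * c)) := by
      rw [← key (a * c) b]
      have := congrArg (· * c) (key a b)
      simp only [add_mul, sub_mul, smul_mul_assoc, one_mul] at this
      rw [← this]
      noncomm_ring
    rw [e]
    refine Submodule.sub_mem _ (Submodule.add_mem _ ?_ ?_) (Submodule.add_mem _ ?_ ?_) <;>
    exact Submodule.smul_mem _ _ (Submodule.subset_span (by simp))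
  have comm : ∀ b c : A, c * b - b * c = 0 := by
    intro b c
    by_contra hu
    set u := c * b - b * c with hu'
    set I : Submodule A A := Submodule.span A {u}
    have hI : I ≠ ⊥ := by simpa [I] using hu
    have hle : I.restrictScalars F ≤ Submodule.span F ({1, b, c, b * c} : Set A) := by
      intro y hy
      obtain ⟨a, rfl⟩ := Submodule.mem_span_singleton.mp hy
      exact mem a b c
    have h1 := finrank_le_sq_finrank_leftIdeal (F := F) I hI
    have hcard : Module.finrank F (Submodule.span F ({1, b, c, b * c} : Set A)) ≤ 4 := by
      classical
      have := finrank_span_finset_le_card (R := F) ({1, b, c, b * c} : Finset A)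
      simp only [Finset.coe_insert, Finset.coe_singleton] at this
      exact this.trans Finset.card_le_four
    have hIr : Module.finrank F I = Module.finrank F (I.restrictScalars F) := rfl
    have h4 : 4 ≤ Module.finrank F I := by
      rw [hdeg] at h1
      nlinarith
    have heq : I.restrictScalars F = Submodule.span F ({1, b, c, b * c} : Set A) :=
      Submodule.eq_of_le_of_finrank_le hle (by omega)
    have h1I : (1 : A) ∈ I.restrictScalars F := by
      rw [heq]; exact Submodule.subset_span (by simp)
    have htop : I = ⊤ := (Ideal.eq_top_iff_one (I := I)).mpr h1I
    have : Module.finrank F (I.restrictScalars F) = 16 := by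
      rw [htop, Submodule.restrictScalars_top, finrank_top, hdeg]
    rw [heq] at this
    omega
  have hbot : (⊥ : Subalgebra F A) = ⊤ := by
    rw [eq_comm, eq_bot_iff]
    intro a _
    refine Algebra.IsCentral.out (Subalgebra.mem_center_iff.mpr fun b ↦ ?_)
    exact sub_eq_zero.mp (comm a b)
  have h1 : Module.finrank F (⊥ : Subalgebra F A) = 1 := Subalgebra.finrank_bot
  rw [hbot, ← Subalgebra.finrank_toSubmodule, Algebra.top_toSubmodule, finrank_top, hdeg] at h1
  omega

namespace Matrix

theorem rank_add_le_rank_add_rank {F : Type*} [Field F] {n : ℕ} (X Y : Matrix (Fin n) (Fin n) F) :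
    (X + Y).rank ≤ X.rank + Y.rank := by
  unfold rank
  rw [mulVecLin_add]
  refine (Submodule.finrank_mono (LinearMap.range_add_le _ _)).trans ?_
  exact Submodule.finrank_add_le_finrank_add_finrank _ _

theorem exists_eq_vecMulVec_of_rank_eq_one {F : Type*} [Field F] {n : ℕ}
    {X : Matrix (Fin n) (Fin n) F} (hX : X.rank = 1) : ∃ v w, X = vecMulVec v w := by
  obtain ⟨v, -, hv⟩ := finrank_eq_one_iff'.mp hX
  choose c hc using fun j ↦ hv ⟨X *ᵥ Pi.single j 1, ⟨_, rfl⟩⟩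
  refine ⟨v, c, ?_⟩
  ext i j
  have := congrFun (congrArg Subtype.val (hc j)) i
  simp at this
  simp [vecMulVec_apply, ← this, mul_comm]

theorem finrank_range_mulLeft {F : Type*} [Field F] {n : ℕ} (X : Matrix (Fin n) (Fin n) F) :
    Module.finrank F (LinearMap.range (LinearMap.mulLeft F X)) = n * X.rank := by
  have e : LinearMap.ker (LinearMap.mulLeft F X) ≃ₗ[F] (Fin n → LinearMap.ker X.mulVecLin) :=
    { toFun M j := ⟨M.1.col j, by
        have := M.2
        rw [LinearMap.mem_ker, LinearMap.mulLeft_apply] at this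
        ext i
        exact congrFun (congrFun this i) j⟩
      invFun f := ⟨Matrix.of fun i j ↦ (f j).1 i, by
        rw [LinearMap.mem_ker, LinearMap.mulLeft_apply]
        ext i j
        exact congrFun (f j).2 i⟩
      map_add' _ _ := rfl
      map_smul' _ _ := rfl
      left_inv _ := rfl
      right_inv _ := rfl }
  have h1 := LinearMap.finrank_range_add_finrank_ker (LinearMap.mulLeft F X)
  have h2 := LinearMap.finrank_range_add_finrank_ker X.mulVecLin
  rw [e.finrank_eq, Module.finrank_pi_fintype, Module.finrank_matrix] at h1
  simp at h1 h2
  unfold rank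
  have h3 := congrArg (n * ·) h2
  simp only [mul_add] at h3
  linarith

theorem one_le_rank_of_ne_zero {F : Type*} [Field F] {n : ℕ} {X : Matrix (Fin n) (Fin n) F}
    (hX : X ≠ 0) :
    1 ≤ X.rank := by
  by_contra! h
  refine hX (toLin'.injective ?_)
  rw [map_zero, toLin'_apply', ← LinearMap.range_eq_bot, ← Submodule.finrank_eq_zero (R := F)]
  exact Nat.lt_one_iff.mp h

theorem eq_zero_of_rank_smul_lt {F : Type*} [Field F] {n : ℕ} {X : Matrix (Fin n) (Fin n) F}
    {c : F} (h : (c • X).rank < X.rank) : c = 0 := by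
  by_contra hc
  have : X = (c • X) * (c⁻¹ • (1 : Matrix (Fin n) (Fin n) F)) := by
    simp [smul_smul, hc]
  have h2 := rank_mul_le_left (c • X) (c⁻¹ • (1 : Matrix (Fin n) (Fin n) F))
  rw [← this] at h2
  omega

section Involution

variable {F : Type*} [Field F] {σ : Matrix (Fin 4) (Fin 4) F →ₗ[F] Matrix (Fin 4) (Fin 4) F}

/-- A square-zero symmetrized element `x` for which all `x ∘ y` with `y` symmetrized lie in
`F x + F` does not have rank 1. -/
theorem rank_ne_one_of_mul_self_eq_zero (hanti : ∀ x y, σ (x * y) = σ y * σ x)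
    (hinv : ∀ a, σ (σ a) = a) {x b : Matrix (Fin 4) (Fin 4) F} (hb : x = b + σ b)
    (hxx : x * x = 0)
    (h : ∀ a, ∃ s c : F, x * (a + σ a) + (a + σ a) * x - s • x
      = c • (1 : Matrix (Fin 4) (Fin 4) F)) :
    x.rank ≠ 1 := by
  intro hr
  have hσx : σ x = x := by rw [hb, map_add, hinv, add_comm]
  have hx0 : x ≠ 0 := by rintro rfl; simp at hr
  obtain ⟨v, w, hvw⟩ := exists_eq_vecMulVec_of_rank_eq_one hr
  have hxax : ∀ a, x * a * x = (w ᵥ* a ⬝ᵥ v) • x := fun a ↦ by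
    rw [hvw, vecMulVec_mul, vecMulVec_mul_vecMulVec, vecMulVec_smul]
  have hxσx : ∀ a, x * σ a * x = x * a * x := fun a ↦ by
    have : σ (x * a * x) = x * σ a * x := by rw [hanti, hanti, hσx, mul_assoc]
    rw [← this, hxax, map_smul, hσx]
  have hxyx : ∀ a, x * (a + σ a) * x = 0 := by
    intro a
    obtain ⟨s, c, hc⟩ := h a
    have hrank : (c • (1 : Matrix (Fin 4) (Fin 4) F)).rank
        < (1 : Matrix (Fin 4) (Fin 4) F).rank := by
      have e : c • (1 : Matrix (Fin 4) (Fin 4) F)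
          = x * ((a + σ a) - s • (1 : Matrix (Fin 4) (Fin 4) F)) + (a + σ a) * x := by
        rw [← hc, mul_sub, mul_smul_comm, mul_one]
        abel
      rw [e, rank_one]
      have h1 := rank_add_le_rank_add_rank (x * ((a + σ a) - s • (1 : Matrix (Fin 4) (Fin 4) F)))
        ((a + σ a) * x)
      have h2 := rank_mul_le_left x ((a + σ a) - s • (1 : Matrix (Fin 4) (Fin 4) F))
      have h3 := rank_mul_le_right (a + σ a) x
      simp only [Fintype.card_fin]
      omega
    have hc0 := eq_zero_of_rank_smul_lt hrank
    rw [hc0, zero_smul] at hc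
    have := congrArg (x * ·) hc
    simpa [mul_sub, mul_add, ← mul_assoc, hxx] using this
  have htwo : ∀ a, x * a * x + x * a * x = 0 := fun a ↦ by
    have := hxyx a
    rwa [mul_add, add_mul, hxσx] at this
  have hall : ∀ a, x * a * x = 0 := by
    intro a
    have e1 : x * σ a * x * a * x = 0 := by
      have : x * σ a * x * a * x = x * (σ a * b * a) * x + x * σ (σ a * b * a) * x := by
        simp only [hanti, hinv]
        nth_rw 2 [hb]
        noncomm_ring
      rw [this, hxσx, htwo]
    rw [hxσx, hxax, smul_mul_assoc, smul_mul_assoc, hxax, smul_smul] at e1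
    rw [hxax]
    have := (smul_eq_zero.mp e1).resolve_right hx0
    rw [mul_self_eq_zero.mp this, zero_smul]
  rw [hvw, Ne, vecMulVec_eq_zero, not_or] at hx0
  obtain ⟨i, hi⟩ := Function.ne_iff.mp hx0.1
  obtain ⟨j, hj⟩ := Function.ne_iff.mp hx0.2
  have h0 := congrFun (congrFun (hall (vecMulVec (Pi.single j 1) (Pi.single i 1))) i) j
  rw [hxax, hvw, vecMul_vecMulVec, smul_dotProduct, single_dotProduct, dotProduct_single] at h0
  simp only [one_mul, mul_one, smul_apply, vecMulVec_apply, smul_eq_mul, zero_apply,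
    mul_eq_zero] at h0
  simp only [Pi.zero_apply] at hi hj
  tauto

/-- A symmetric idempotent `f` whose complement `g = 1 - f` satisfies `g y g ∈ F g` for all
symmetrized `y` does not have rank 1. -/
theorem rank_ne_one_of_isIdempotentElem (hanti : ∀ x y, σ (x * y) = σ y * σ x)
    (hinv : ∀ a, σ (σ a) = a) {f : Matrix (Fin 4) (Fin 4) F} (hf : σ f = f) (hff : f * f = f)
    (h : ∀ a, ∃ c : F, (1 - f) * (a + σ a) * (1 - f) = c • (1 - f)) :
    f.rank ≠ 1 := by
  intro hr
  have hf0 : f ≠ 0 := by rintro rfl; simp at hr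
  obtain ⟨v, w, hvw⟩ := exists_eq_vecMulVec_of_rank_eq_one hr
  have hσ1 : σ 1 = 1 := by
    have := hanti (σ 1) 1
    rwa [mul_one, hinv, mul_one, eq_comm] at this
  set g := 1 - f with hg
  have hσg : σ g = g := by rw [hg, map_sub, hσ1, hf]
  have hgg : g * g = g := IsIdempotentElem.one_sub hff
  have hgr : 3 ≤ g.rank := by
    have := rank_add_le_rank_add_rank f g
    rw [hg, add_sub_cancel, rank_one, Fintype.card_fin, ← hg] at this
    omega
  have hwv : w ⬝ᵥ v ≠ 0 := by
    intro h0
    apply hf0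
    rw [← hff, hvw, vecMulVec_mul_vecMulVec, h0, zero_smul, vecMulVec_zero]
  have hw : w ≠ 0 := by rintro rfl; simp at hwv
  have : Nontrivial (LinearMap.range g.mulVecLin) :=
    Module.nontrivial_of_finrank_pos (R := F) (by unfold rank at hgr; omega)
  obtain ⟨p, hp0⟩ := exists_ne (0 : LinearMap.range g.mulVecLin)
  obtain ⟨q, hpq⟩ := exists_linearIndependent_pair_of_one_lt_finrank (R := F)
    (by unfold rank at hgr; omega) hp0
  have hq0 : (q : Fin 4 → F) ≠ 0 := by
    simpa using hpq.ne_zero 1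
  have hgu : ∀ u : LinearMap.range g.mulVecLin, g *ᵥ u.1 = u.1 := by
    rintro ⟨_, u, rfl⟩
    simp [hgg]
  have hσu : ∀ u : LinearMap.range g.mulVecLin,
      σ (vecMulVec u.1 w) * g = σ (vecMulVec u.1 w) := fun u ↦ by
    have := hanti g (vecMulVec u.1 w)
    rwa [mul_vecMulVec, hgu, hσg, eq_comm] at this
  set y := vecMulVec p.1 w * σ (vecMulVec q.1 w) + vecMulVec q.1 w * σ (vecMulVec p.1 w)
    with hy
  obtain ⟨c, hc⟩ := h (vecMulVec p.1 w * σ (vecMulVec q.1 w))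
  have hyc : y = c • g := by
    rw [← hc, hanti, hinv, mul_add, add_mul, ← mul_assoc, ← mul_assoc, mul_assoc _ _ g,
      mul_assoc _ _ g, hσu, hσu, mul_vecMulVec, mul_vecMulVec, hgu, hgu]
  have hyr : y.rank ≤ 2 := by
    have h1 := rank_add_le_rank_add_rank (vecMulVec p.1 w * σ (vecMulVec q.1 w))
      (vecMulVec q.1 w * σ (vecMulVec p.1 w))
    rw [← hy] at h1
    have h2 := rank_mul_le_left (vecMulVec p.1 w) (σ (vecMulVec q.1 w))
    have h3 := rank_mul_le_left (vecMulVec q.1 w) (σ (vecMulVec p.1 w))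
    have h4 := rank_vecMulVec_le p.1 w
    have h5 := rank_vecMulVec_le q.1 w
    omega
  have hc0 : c = 0 := eq_zero_of_rank_smul_lt (X := g) (by rw [← hyc]; omega)
  rw [hc0, zero_smul, hy, vecMulVec_mul, vecMulVec_mul] at hyc
  have hα : w ᵥ* σ (vecMulVec q.1 w) = 0 := by
    ext j
    refine (LinearIndependent.pair_iff.mp hpq _ ((w ᵥ* σ (vecMulVec p.1 w)) j) ?_).1
    ext i
    have := congrFun (congrFun hyc i) j
    simpa [vecMulVec_apply, mul_comm] using this
  have hfz : f * σ (vecMulVec q.1 w) = 0 := by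
    rw [hvw, vecMulVec_mul, hα, vecMulVec_zero]
  have hzf := congrArg σ hfz
  rw [hanti, hinv, hf, map_zero, hvw, vecMulVec_mul_vecMulVec, vecMulVec_eq_zero] at hzf
  simp_all

theorem rank_eq_two_of_mul_self_eq_smul (hanti : ∀ x y, σ (x * y) = σ y * σ x)
    (hinv : ∀ a, σ (σ a) = a) {x b : Matrix (Fin 4) (Fin 4) F} (hb : x = b + σ b) {t : F}
    (hx0 : x ≠ 0) (hxt : x ≠ t • 1) (hxx : x * x = t • x)
    (h : ∀ a, ∃ s c : F, x * (a + σ a) + (a + σ a) * x - t • (a + σ a) - s • x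
      = c • (1 : Matrix (Fin 4) (Fin 4) F)) :
    x.rank = 2 := by
  have hσx : σ x = x := by rw [hb, map_add, hinv, add_comm]
  have h1 : 1 ≤ x.rank := one_le_rank_of_ne_zero hx0
  have h3 : x.rank ≤ 3 := by
    have e : x * (x - t • 1) = 0 := by rw [mul_sub, hxx]; simp
    have := rank_add_rank_le_card_of_mul_eq_zero e
    have := one_le_rank_of_ne_zero (sub_ne_zero.mpr hxt)
    simp at *
    omega
  rcases eq_or_ne t 0 with rfl | ht
  · rw [zero_smul] at hxx
    have h2 := rank_add_rank_le_card_of_mul_eq_zero hxx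
    have := rank_ne_one_of_mul_self_eq_zero hanti hinv hb hxx (by simpa using h)
    simp at h2
    omega
  obtain ⟨f, rfl⟩ : ∃ f, x = t • f := ⟨t⁻¹ • x, by simp [smul_smul, ht]⟩
  have hff : f * f = f := by
    simp only [smul_mul_assoc, mul_smul_comm] at hxx
    exact smul_right_injective _ ht (smul_right_injective _ ht hxx)
  have hfσ : σ f = f := by
    rw [map_smul] at hσx
    exact smul_right_injective _ ht hσx
  have hσ1 : σ 1 = 1 := by
    have := hanti (σ 1) 1
    rwa [mul_one, hinv, mul_one, eq_comm] at this
  have hr : (t • f).rank = f.rank :=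
    rank_smul_of_mem_nonZeroDivisors f (mem_nonZeroDivisors_of_ne_zero ht)
  have h' : ∀ a, ∃ s c : F, f * (a + σ a) + (a + σ a) * f - (a + σ a)
      = s • f + c • (1 : Matrix (Fin 4) (Fin 4) F) := by
    intro a
    obtain ⟨s, c, hc⟩ := h a
    refine ⟨s, t⁻¹ * c, smul_right_injective _ ht ?_⟩
    simp only [smul_mul_assoc, mul_smul_comm] at hc
    simp only [smul_add, smul_sub, smul_smul, mul_inv_cancel_left₀ ht] at hc ⊢
    rw [← hc, mul_comm s t]
    abel
  have hne1 : f.rank ≠ 1 := by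
    refine rank_ne_one_of_isIdempotentElem hanti hinv hfσ hff fun a ↦ ?_
    obtain ⟨s, c, hc⟩ := h' a
    refine ⟨-c, ?_⟩
    have e : (1 - f) * (a + σ a) * (1 - f)
        = -(f * (a + σ a) + (a + σ a) * f - (a + σ a)) + f * (a + σ a) * f := by noncomm_ring
    have e2 : f * (a + σ a) * f = (s + c) • f := by
      have := congrArg (f * ·) hc
      simp only [mul_add, mul_sub, ← mul_assoc, hff, mul_smul_comm, mul_one] at this
      rw [add_smul, ← this]
      noncomm_ring
    rw [e, e2, hc]
    module
  have hne3 : (1 - f).rank ≠ 1 := by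
    refine rank_ne_one_of_isIdempotentElem hanti hinv (by rw [map_sub, hσ1, hfσ])
      (IsIdempotentElem.one_sub hff) fun a ↦ ?_
    obtain ⟨s, c, hc⟩ := h' a
    refine ⟨s + c, ?_⟩
    have := congrArg (f * ·) hc
    simp only [mul_add, mul_sub, ← mul_assoc, hff, mul_smul_comm, mul_one] at this
    rw [sub_sub_cancel, add_smul, ← this]
    noncomm_ring
  have hle := rank_add_rank_le_card_of_mul_eq_zero (A := f) (B := 1 - f)
    (by rw [mul_sub, hff]; simp)
  have hge := rank_add_le_rank_add_rank f (1 - f)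
  rw [add_sub_cancel, rank_one] at hge
  simp only [Fintype.card_fin] at hle hge
  omega

end Involution

end Matrix

theorem Matrix.mul_finrank_le_finrank_range_mulLeft {F D : Type*} [Field F] [DivisionRing D]
    [Algebra F D] [FiniteDimensional F D] {n : ℕ} {X : Matrix (Fin n) (Fin n) D} (hX : X ≠ 0) :
    n * Module.finrank F D ≤ Module.finrank F (LinearMap.range (LinearMap.mulLeft F X)) := by
  obtain ⟨i, j, hij⟩ : ∃ i j, X i j ≠ 0 := by
    by_contra! h
    exact hX (Matrix.ext h)
  have hmul : ∀ (δ : Fin n → D) (k : Fin n), (X * updateRow 0 j δ) i k = X i j * δ k := by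
    intro δ k
    simp [mul_apply, updateRow_apply]
  let φ : (Fin n → D) →ₗ[F] Matrix (Fin n) (Fin n) D :=
    { toFun δ := updateRow 0 j δ
      map_add' δ ε := by ext a b; simp [updateRow_apply]; split_ifs <;> simp
      map_smul' c δ := by ext a b; simp [updateRow_apply] }
  let ψ : (Fin n → D) →ₗ[F] LinearMap.range (LinearMap.mulLeft F X) :=
    (LinearMap.mulLeft F X).rangeRestrict ∘ₗ φ
  have hψ : Function.Injective ψ := by
    rw [injective_iff_map_eq_zero]
    intro δ hδ
    ext k
    have h0 : X * updateRow 0 j δ = 0 := congrArg Subtype.val hδ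
    have := hmul δ k
    rw [h0, zero_apply, eq_comm, mul_eq_zero] at this
    exact this.resolve_left hij
  simpa [Module.finrank_pi_fintype] using LinearMap.finrank_le_finrank_of_injective hψ

theorem AlgEquiv.finrank_range_mulLeft {F A B : Type*} [Field F] [Ring A] [Algebra F A]
    [Ring B] [Algebra F B] (e : A ≃ₐ[F] B) (x : A) :
    Module.finrank F (LinearMap.range (LinearMap.mulLeft F (e x)))
      = Module.finrank F (LinearMap.range (LinearMap.mulLeft F x)) := by
  have : LinearMap.range (LinearMap.mulLeft F (e x))
      = (LinearMap.range (LinearMap.mulLeft F x)).map e.toLinearEquiv.toLinearMap := by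
    ext y
    constructor
    · rintro ⟨a, rfl⟩
      exact ⟨x * e.symm a, ⟨_, rfl⟩, by simp⟩
    · rintro ⟨_, ⟨a, rfl⟩, rfl⟩
      exact ⟨e a, by simp⟩
  rw [this]
  exact LinearEquiv.finrank_map_eq e.toLinearEquiv _

/-- In a simple algebra of dimension 16 with involution, the right ideal generated by a nonscalar
symmetrized `x` with `x² = t x` has dimension 8, provided that `x y + y x - t y ∈ F x + F` for
all symmetrized `y`. -/
theorem finrank_range_mulLeft_eq_eight {F A : Type*} [Field F] [Ring A] [Algebra F A]
    [IsSimpleRing A] [FiniteDimensional F A] (hdeg : Module.finrank F A = 16)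
    (σ : A →ₗ[F] A) (hanti : ∀ x y : A, σ (x * y) = σ y * σ x)
    (hinv : ∀ a : A, σ (σ a) = a) {x b : A} (hb : x = b + σ b) {t : F}
    (hx0 : x ≠ 0) (hxt : x ≠ t • 1) (hxx : x * x = t • x)
    (h : ∀ a, ∃ s c : F, x * (a + σ a) + (a + σ a) * x - t • (a + σ a) - s • x = c • (1 : A)) :
    Module.finrank F (LinearMap.range (LinearMap.mulLeft F x)) = 8 := by
  have : IsArtinianRing A := IsArtinianRing.of_finite F A
  obtain ⟨n, hn, D, _, _, _, ⟨e⟩⟩ := IsSimpleRing.exists_algEquiv_matrix_divisionRing_finite F A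
  have hnd : n * n * Module.finrank F D = 16 := by
    rw [← hdeg, e.toLinearEquiv.finrank_eq, Module.finrank_matrix]
    simp
  have hlow : ∀ y : A, y ≠ 0 → n * Module.finrank F D
      ≤ Module.finrank F (LinearMap.range (LinearMap.mulLeft F y)) := fun y hy ↦ by
    rw [← e.finrank_range_mulLeft]
    exact Matrix.mul_finrank_le_finrank_range_mulLeft (by simpa using hy)
  have h1 := hlow x hx0
  have h2 := hlow (x - t • 1) (sub_ne_zero.mpr hxt)
  have hle : LinearMap.range (LinearMap.mulLeft F (x - t • 1))
      ≤ LinearMap.ker (LinearMap.mulLeft F x) := by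
    rintro _ ⟨a, rfl⟩
    rw [LinearMap.mem_ker, LinearMap.mulLeft_apply, LinearMap.mulLeft_apply, ← mul_assoc,
      mul_sub, hxx]
    simp
  have h3 := Submodule.finrank_mono hle
  have h4 := LinearMap.finrank_range_add_finrank_ker (LinearMap.mulLeft F x)
  have hn4 : n ≤ 4 := by
    have : 1 ≤ Module.finrank F D := Module.finrank_pos
    nlinarith
  have hn1 : 1 ≤ n := NeZero.one_le
  interval_cases n
  · omega
  · omega
  · omega
  · have hD : Module.finrank F D = 1 := by omega
    let ε : F ≃ₐ[F] D := AlgEquiv.ofBijective (Algebra.ofId F D)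
      (Algebra.finrank_eq_one_iff_bijective_algebraMap.mp hD)
    let e' : A ≃ₐ[F] Matrix (Fin 4) (Fin 4) F := e.trans ε.symm.mapMatrix
    let τ : Matrix (Fin 4) (Fin 4) F →ₗ[F] Matrix (Fin 4) (Fin 4) F :=
      e'.toLinearMap ∘ₗ σ ∘ₗ e'.symm.toLinearMap
    have hτ : ∀ y, τ y = e' (σ (e'.symm y)) := fun _ ↦ rfl
    rw [← e'.finrank_range_mulLeft, Matrix.finrank_range_mulLeft,
      Matrix.rank_eq_two_of_mul_self_eq_smul (σ := τ) (x := e' x) (b := e' b) (t := t)]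
    · simp [hτ, hanti]
    · simp [hτ, hinv]
    · simp [hτ, hb]
    · simpa using hx0
    · intro hc
      exact hxt (e'.injective (by simpa using hc))
    · rw [← map_mul, hxx, map_smul]
    · intro a
      obtain ⟨s, c, hc⟩ := h (e'.symm a)
      refine ⟨s, c, ?_⟩
      simpa [hτ] using congrArg e' hc

/-- Let `(A, σ)` be a central simple algebra of degree 4 with symplectic involution and
`x ∈ Symd(A, σ)` nonzero with `Nrp_σ(x) = 0`.  Then the right ideal `xA` has reduced
dimension 2 (i.e. `dim_F xA = 8`), and if moreover `Trp_σ(x) = 0` then `xA` is `σ`-isotropic: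
`σ(xA)·(xA) = (0)`. -/
theorem ideal_of_isotropic_vector (F A : Type*) [Field F] [Ring A] [Algebra F A]
    [Algebra.IsCentral F A] [IsSimpleRing A] [FiniteDimensional F A]
    (hdeg : Module.finrank F A = 16)
    (σ : A →ₗ[F] A) (hanti : ∀ x y : A, σ (x * y) = σ y * σ x)
    (hinv : ∀ a : A, σ (σ a) = a)
    (Symd : Submodule F A)
    (hSymd : (Symd : Set A) = {x : A | ∃ a : A, x = a + σ a})
    (Trp : A →ₗ[F] F) (Nrp : A → F)
    (hCH : ∀ a ∈ Symd, a ^ 2 - Trp a • a + algebraMap F A (Nrp a) = 0)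
    (x : A) (hx : x ∈ Symd) (hxne : x ≠ 0) (hNrp : Nrp x = 0) :
    (∃ S : Submodule F A, (S : Set A) = {y : A | ∃ a : A, y = x * a} ∧
      Module.finrank F S = 8) ∧
    (Trp x = 0 → ∀ a b : A, σ (x * a) * (x * b) = 0) := by
  have hmem : ∀ y, y ∈ Symd ↔ ∃ a, y = a + σ a := fun y ↦ by
    rw [← SetLike.mem_coe, hSymd, Set.mem_ofPred_eq]
  obtain ⟨b, hb⟩ := (hmem x).mp hx
  have hxx : x * x = Trp x • x := by
    have := hCH x hx
    rwa [hNrp, map_zero, add_zero, sub_eq_zero, sq] at this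
  have hpol : ∀ y ∈ Symd, ∃ c : F, x * y + y * x - Trp x • y - Trp y • x = c • (1 : A) := by
    intro y hy
    refine ⟨Nrp y - Nrp (x + y), ?_⟩
    have h1 := hCH y hy
    have h2 := hCH (x + y) (Symd.add_mem hx hy)
    rw [Algebra.algebraMap_eq_smul_one] at h1 h2
    rw [map_add, sq, add_mul, mul_add, mul_add, hxx] at h2
    rw [sq] at h1
    refine sub_eq_zero.mp (Eq.trans ?_ (sub_eq_zero.mpr (h2.trans h1.symm)))
    module
  refine ⟨⟨LinearMap.range (LinearMap.mulLeft F x), ?_, ?_⟩, fun htr c d ↦ ?_⟩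
  · ext y
    simp [eq_comm]
  · refine finrank_range_mulLeft_eq_eight hdeg σ hanti hinv hb hxne (t := Trp x) ?_ hxx
      fun a ↦ ⟨Trp (a + σ a), hpol _ ((hmem _).mpr ⟨a, rfl⟩)⟩
    intro hsc
    have ht : Trp x ≠ 0 := fun h0 ↦ hxne (by rw [hsc, h0, zero_smul])
    obtain ⟨a, ha⟩ := exists_add_map_notMem_scalar hdeg σ hanti
    obtain ⟨c, hc⟩ := hpol _ ((hmem _).mpr ⟨a, rfl⟩)
    set y := a + σ a
    apply ha ((Trp x)⁻¹ * (c + Trp y * Trp x))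
    have hxy : x * y = Trp x • y := by
      nth_rw 1 [hsc]
      rw [smul_mul_assoc, one_mul]
    have hyx : y * x = Trp x • y := by
      nth_rw 1 [hsc]
      rw [mul_smul_comm, mul_one]
    rw [hxy, hyx, add_sub_cancel_right, sub_eq_iff_eq_add] at hc
    have hyx' : Trp y • x = (Trp y * Trp x) • (1 : A) := by
      rw [mul_smul, ← hsc]
    rw [Algebra.algebraMap_eq_smul_one, ← smul_right_injective A ht |>.eq_iff, hc, hyx', smul_smul,
      mul_inv_cancel_left₀ ht, add_smul]
  · have hσx : σ x = x := by rw [hb, map_add, hinv, add_comm]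
    rw [hanti, hσx, mul_assoc, ← mul_assoc x x, hxx, htr, zero_smul, zero_mul, mul_zero]
end
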